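/- In the gluing setup, for every x, y ∈ V_d the shortest-path distance d̂(x,y) is given by: d̂(x,y) = f̂(x,y) if x,y ∈ V_f for some f ∈ {p} ∪ 𝔉; and d̂(x,y) = inf{ f̂(x,a) + p̂(a,b) + ĝ(b,y) : a ∈ V_f ∩ V_p, b ∈ V_g ∩ V_p } if x ∈ V_f and y ∈ V_g for distinct f, g ∈ {p} ∪ 𝔉. -/

import Mathlib

open scoped Classical

universe u

namespace GraphMetricPaper

variable {X : Type u}

/-- The vertex set `V = ⋃ E` of a graph given by an adjacency relation `E`. -/
def Vtx (E : X → X → Prop) : Set X := {x | ∃ y, E x y}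

/-- Two points are joined by a walk in the graph `E`. -/
def Joined (E : X → X → Prop) (x y : X) : Prop :=
  ∃ (n : ℕ) (c : ℕ → X), c 0 = x ∧ c n = y ∧ ∀ i, i < n → E (c i) (c (i + 1))

/-- The set of weights of walks from `x` to `y`. -/
def walkSums (E : X → X → Prop) (d : X → X → ℝ) (x y : X) : Set ℝ :=
  {s | ∃ (n : ℕ) (c : ℕ → X), c 0 = x ∧ c n = y ∧ (∀ i, i < n → E (c i) (c (i + 1))) ∧
    s = ∑ i ∈ Finset.range n, d (c i) (c (i + 1))}

/-- The shortest-path pseudometric `d̂` determined by a weight function `d` on a graph `E`. -/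
noncomputable def hatd (E : X → X → Prop) (d : X → X → ℝ) (x y : X) : ℝ :=
  sInf (walkSums E d x y)

/-- The function `ď` bounding the possible extensions of `d` from below:
`ď(x,y) = sup_{ab ∈ E} max {0, d(ab) - d̂(a,x) - d̂(y,b)}`. -/
noncomputable def checkd (E : X → X → Prop) (d : X → X → ℝ) (x y : X) : ℝ :=
  sSup ({0} ∪ {r | ∃ a b, E a b ∧ r = d a b - hatd E d a x - hatd E d y b})

/-- The pseudometric `d̈` on doubletons:
`d̈(xy,uv) = min {d̂(x,u) + d̂(y,v), d̂(x,v) + d̂(y,u)}`. -/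
noncomputable def ddot (E : X → X → Prop) (d : X → X → ℝ) (x y u v : X) : ℝ :=
  min (hatd E d x u + hatd E d y v) (hatd E d x v + hatd E d y u)

/-- `d` is a graph pseudometric with edge relation `E`:  `E` is a (symmetric, irreflexive)
connected graph, `d` is a nonnegative symmetric weight on the edges, and `d = d̂` on edges. -/
structure IsGraphPseudometric (E : X → X → Prop) (d : X → X → ℝ) : Prop where
  symm : ∀ ⦃a b⦄, E a b → E b a
  irrefl : ∀ a, ¬ E a a
  wt_symm : ∀ ⦃a b⦄, E a b → d a b = d b a
  nonneg : ∀ ⦃a b⦄, E a b → 0 ≤ d a b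
  connected : ∀ x ∈ Vtx E, ∀ y ∈ Vtx E, Joined E x y
  edge_eq : ∀ ⦃a b⦄, E a b → d a b = hatd E d a b

/-- A graph metric is a graph pseudometric with strictly positive weights. -/
def IsGraphMetric (E : X → X → Prop) (d : X → X → ℝ) : Prop :=
  IsGraphPseudometric E d ∧ ∀ ⦃a b⦄, E a b → 0 < d a b

/-- A floppy graph pseudometric: `ď(x,y) < d̂(x,y)` for every `xy ∈ [V]² \ E`. -/
def FloppyPseudometric (E : X → X → Prop) (d : X → X → ℝ) : Prop :=
  IsGraphPseudometric E d ∧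
    ∀ x ∈ Vtx E, ∀ y ∈ Vtx E, x ≠ y → ¬ E x y → checkd E d x y < hatd E d x y

/-- A floppy graph metric: `ď(x,y) < d̂(x,y)` for every `xy ∈ [V]² \ E`. -/
def FloppyMetric (E : X → X → Prop) (d : X → X → ℝ) : Prop :=
  IsGraphMetric E d ∧
    ∀ x ∈ Vtx E, ∀ y ∈ Vtx E, x ≠ y → ¬ E x y → checkd E d x y < hatd E d x y

/-- The edge relation of the one-step extension `E ∪ {xy}`. -/
def extEdge (E : X → X → Prop) (x y : X) : X → X → Prop :=
  fun a b => E a b ∨ (a = x ∧ b = y) ∨ (a = y ∧ b = x)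

/-- The weight function of the one-step extension `d ∪ {⟨xy, r⟩}`. -/
noncomputable def extWt (d : X → X → ℝ) (x y : X) (r : ℝ) : X → X → ℝ :=
  fun a b => if (a = x ∧ b = y) ∨ (a = y ∧ b = x) then r else d a b

/-- The set `[V]² \ E` of unordered pairs of distinct vertices that are not edges. -/
def nonEdgePairs (E : X → X → Prop) : Set (Sym2 X) :=
  {e | ∃ a b : X, e = s(a, b) ∧ a ≠ b ∧ a ∈ Vtx E ∧ b ∈ Vtx E ∧ ¬ E a b}

/-- A set of (unordered) weighted pairs, presented as a relation `R`, is a full metric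
on `V`: it is symmetric, its domain is exactly `[V]²`, it is single-valued, positive,
and satisfies the triangle inequality. -/
def IsFullMetricRel (V : Set X) (R : X → X → ℝ → Prop) : Prop :=
  (∀ a b r, R a b r → R b a r) ∧
  (∀ a b r, R a b r → a ∈ V ∧ b ∈ V ∧ a ≠ b) ∧
  (∀ a b, a ∈ V → b ∈ V → a ≠ b → ∃ r, R a b r) ∧
  (∀ a b r s, R a b r → R a b s → r = s) ∧
  (∀ a b r, R a b r → 0 < r) ∧
  (∀ a b c r s t, R a b r → R b c s → R a c t → t ≤ r + s)

/-- A weight function `D` on `[V]²` is a full metric on `V`. -/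
def IsFullMetricOn (V : Set X) (D : X → X → ℝ) : Prop :=
  (∀ a b, a ∈ V → b ∈ V → a ≠ b → D a b = D b a) ∧
  (∀ a b, a ∈ V → b ∈ V → a ≠ b → 0 < D a b) ∧
  (∀ a b c, a ∈ V → b ∈ V → c ∈ V → a ≠ b → b ≠ c → a ≠ c → D a c ≤ D a b + D b c)

/-- Player I has a winning strategy in the metric-extending game `Game_d(lam, Fam)`:
there are functions `S1, S2` choosing, for each inning `β < lam` and each sequence of
previous answers of player II, a legal doubleton in `[V]²` and a set from `Fam`, such that
for every play of player II respecting the strategy, the resulting relation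
`d ∪ {⟨x_α y_α, r_α⟩ : α < lam}` is a full metric on `V`. -/
def WinningStratI (V : Set X) (E : X → X → Prop) (d : X → X → ℝ)
    (lam : Ordinal.{u}) (Fam : Set (Set ℝ)) : Prop :=
  ∃ (S1 : ∀ β : Ordinal.{u}, β < lam → (∀ α : Ordinal.{u}, α < β → ℝ) → X × X)
    (S2 : ∀ β : Ordinal.{u}, β < lam → (∀ α : Ordinal.{u}, α < β → ℝ) → Set ℝ),
    (∀ β hβ s, S2 β hβ s ∈ Fam) ∧
    (∀ β hβ s, (S1 β hβ s).1 ∈ V ∧ (S1 β hβ s).2 ∈ V ∧ (S1 β hβ s).1 ≠ (S1 β hβ s).2) ∧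
    (∀ s : ∀ α : Ordinal.{u}, α < lam → ℝ,
      (∀ α (hα : α < lam), s α hα ∈ S2 α hα (fun γ hγ => s γ (hγ.trans hα))) →
      IsFullMetricRel V (fun a b r =>
        (E a b ∧ r = d a b) ∨
        ∃ α, ∃ hα : α < lam,
          ((a = (S1 α hα (fun γ hγ => s γ (hγ.trans hα))).1 ∧
            b = (S1 α hα (fun γ hγ => s γ (hγ.trans hα))).2) ∨
           (a = (S1 α hα (fun γ hγ => s γ (hγ.trans hα))).2 ∧
            b = (S1 α hα (fun γ hγ => s γ (hγ.trans hα))).1)) ∧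
          r = s α hα))

/-- Player II has a winning strategy in the metric-extending game `Game_d(lam, Fam)`:
there is a function `T` assigning to each inning `β < lam` and each sequence of moves of
player I (of length `β + 1`) an answer in the set component of the last move, such that
for every legal play of player I, the resulting relation is not a full metric on `V`. -/
def WinningStratII (V : Set X) (E : X → X → Prop) (d : X → X → ℝ)
    (lam : Ordinal.{u}) (Fam : Set (Set ℝ)) : Prop :=
  ∃ T : ∀ β : Ordinal.{u}, β < lam → (∀ α : Ordinal.{u}, α ≤ β → (X × X) × Set ℝ) → ℝ,
    (∀ β hβ p, (p β le_rfl).2 ∈ Fam → T β hβ p ∈ (p β le_rfl).2) ∧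
    (∀ p : ∀ α : Ordinal.{u}, α < lam → (X × X) × Set ℝ,
      (∀ α hα, (p α hα).1.1 ∈ V ∧ (p α hα).1.2 ∈ V ∧ (p α hα).1.1 ≠ (p α hα).1.2 ∧
        (p α hα).2 ∈ Fam) →
      ¬ IsFullMetricRel V (fun a b r =>
        (E a b ∧ r = d a b) ∨
        ∃ α, ∃ hα : α < lam,
          ((a = (p α hα).1.1 ∧ b = (p α hα).1.2) ∨
           (a = (p α hα).1.2 ∧ b = (p α hα).1.1)) ∧
          r = T α hα (fun γ hγ => p γ (lt_of_le_of_lt hγ hα))))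

/-- The edge relation of the glued graph `E_d = E_p ∪ ⋃_{f ∈ F} E_f`. -/
def gluedEdge (Ep : X → X → Prop) (F : Set ((X → X → Prop) × (X → X → ℝ))) :
    X → X → Prop :=
  fun a b => Ep a b ∨ ∃ f ∈ F, f.1 a b

/-- `Λ(v; B) = inf {d̂(a,v) + d̂(v,b) - d̂(a,b) : a, b ∈ B}`. -/
noncomputable def Lam (E : X → X → Prop) (d : X → X → ℝ) (v : X) (B : Set X) : ℝ :=
  sInf {r | ∃ a ∈ B, ∃ b ∈ B, r = hatd E d a v + hatd E d v b - hatd E d a b}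

/-- The gluing setup: a graph pseudometric `p = (Ep, wp)` and a family `F` of graph
pseudometrics such that each member meets `V_p`, agrees with `p̂` on the intersection of
the vertex sets, and distinct members only meet inside `V_p`; `wd` is the glued weight
function `d = p ∪ ⋃ F` on `E_d = E_p ∪ ⋃_{f ∈ F} E_f`. -/
structure GluingSetup (Ep : X → X → Prop) (wp : X → X → ℝ)
    (F : Set ((X → X → Prop) × (X → X → ℝ))) (wd : X → X → ℝ) : Prop where
  hp : IsGraphPseudometric Ep wp
  hF : ∀ f ∈ F, IsGraphPseudometric f.1 f.2
  meet : ∀ f ∈ F, (Vtx f.1 ∩ Vtx Ep).Nonempty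
  agree : ∀ f ∈ F, ∀ x ∈ Vtx f.1 ∩ Vtx Ep, ∀ y ∈ Vtx f.1 ∩ Vtx Ep, x ≠ y →
    hatd f.1 f.2 x y = hatd Ep wp x y
  inter_sub : ∀ f ∈ F, ∀ g ∈ F, f ≠ g → Vtx f.1 ∩ Vtx g.1 ⊆ Vtx Ep
  wd_p : ∀ ⦃a b⦄, Ep a b → wd a b = wp a b
  wd_F : ∀ f ∈ F, ∀ ⦃a b⦄, f.1 a b → wd a b = f.2 a b


section Walks

variable {E E' : X → X → Prop} {d d' : X → X → ℝ} {x y z : X} {s t : ℝ}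

lemma zero_mem_walkSums (E : X → X → Prop) (d : X → X → ℝ) (x : X) : 0 ∈ walkSums E d x x :=
  ⟨0, fun _ => x, rfl, rfl, by simp, by simp⟩

lemma walkSums_induction {P : X → ℝ → Prop} (base : P x 0)
    (step : ∀ y z s, P y s → E y z → P z (s + d y z)) (hs : s ∈ walkSums E d x y) : P y s := by
  obtain ⟨n, c, h0, rfl, hc, rfl⟩ := hs
  induction n with
  | zero => simpa [h0] using base
  | succ n ih =>
    rw [Finset.sum_range_succ]
    exact step _ _ _ (ih fun i hi => hc i (hi.trans n.lt_succ_self)) (hc n n.lt_succ_self)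

lemma walkSums_snoc (hs : s ∈ walkSums E d x y) (hyz : E y z) :
    s + d y z ∈ walkSums E d x z := by
  obtain ⟨n, c, h0, rfl, hc, rfl⟩ := hs
  have hlt : ∀ i, i < n → i ≤ n ∧ i + 1 ≤ n := fun i hi => ⟨hi.le, hi⟩
  refine ⟨n + 1, fun i => if i ≤ n then c i else z, by simp [h0], by simp, fun i hi => ?_, ?_⟩
  · rcases (Nat.lt_succ_iff.mp hi).lt_or_eq with h | rfl
    · simpa [hlt i h] using hc i h
    · simpa using hyz
  · rw [Finset.sum_range_succ]
    congr 1
    · refine Finset.sum_congr rfl fun i hi => ?_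
      simp [hlt i (Finset.mem_range.mp hi)]
    · simp

lemma walkSums_add (hs : s ∈ walkSums E d x y) (ht : t ∈ walkSums E d y z) :
    s + t ∈ walkSums E d x z := by
  refine walkSums_induction (P := fun z t => s + t ∈ walkSums E d x z) (by simpa using hs)
    (fun y z t h hyz => ?_) ht
  rw [← add_assoc]
  exact walkSums_snoc h hyz

lemma nonneg_of_mem_walkSums (hd : ∀ ⦃a b⦄, E a b → 0 ≤ d a b) (hs : s ∈ walkSums E d x y) :
    0 ≤ s :=
  walkSums_induction (P := fun _ s => 0 ≤ s) le_rfl (fun _ _ _ h hE => add_nonneg h (hd hE)) hs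

lemma Joined.walkSums_nonempty (h : Joined E x y) (d : X → X → ℝ) :
    (walkSums E d x y).Nonempty := by
  obtain ⟨n, c, h0, hn, hc⟩ := h
  exact ⟨_, n, c, h0, hn, hc, rfl⟩

lemma Joined.mono (hE : ∀ ⦃a b⦄, E a b → E' a b) (h : Joined E x y) : Joined E' x y := by
  obtain ⟨n, c, h0, hn, hc⟩ := h
  exact ⟨n, c, h0, hn, fun i hi => hE (hc i hi)⟩

lemma Joined.trans (hxy : Joined E x y) (hyz : Joined E y z) : Joined E x z := by
  obtain ⟨s, hs⟩ := hxy.walkSums_nonempty 0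
  obtain ⟨t, ht⟩ := hyz.walkSums_nonempty 0
  obtain ⟨n, c, h0, hn, hc, -⟩ := walkSums_add hs ht
  exact ⟨n, c, h0, hn, hc⟩

lemma hatd_le (hd : ∀ ⦃a b⦄, E a b → 0 ≤ d a b) (hs : s ∈ walkSums E d x y) :
    hatd E d x y ≤ s :=
  csInf_le ⟨0, fun _ => nonneg_of_mem_walkSums hd⟩ hs

lemma hatd_nonneg (hd : ∀ ⦃a b⦄, E a b → 0 ≤ d a b) (x y : X) : 0 ≤ hatd E d x y :=
  Real.sInf_nonneg fun _ => nonneg_of_mem_walkSums hd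

lemma hatd_self (hd : ∀ ⦃a b⦄, E a b → 0 ≤ d a b) (x : X) : hatd E d x x = 0 :=
  (hatd_le hd (zero_mem_walkSums E d x)).antisymm (hatd_nonneg hd x x)

lemma hatd_triangle (hd : ∀ ⦃a b⦄, E a b → 0 ≤ d a b) (hxy : Joined E x y)
    (hyz : Joined E y z) : hatd E d x z ≤ hatd E d x y + hatd E d y z := by
  have h₁ : ∀ t ∈ walkSums E d y z, hatd E d x z - t ≤ hatd E d x y := fun t ht =>
    le_csInf (hxy.walkSums_nonempty d) fun s hs => by
      linarith [hatd_le hd (walkSums_add hs ht)]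
  have h₂ : hatd E d x z - hatd E d x y ≤ hatd E d y z :=
    le_csInf (hyz.walkSums_nonempty d) fun t ht => by linarith [h₁ t ht]
  linarith

lemma hatd_le_hatd (hE : ∀ ⦃a b⦄, E a b → E' a b) (hdd : ∀ ⦃a b⦄, E a b → d' a b = d a b)
    (hd : ∀ ⦃a b⦄, E' a b → 0 ≤ d' a b) (hxy : Joined E x y) :
    hatd E' d' x y ≤ hatd E d x y := by
  refine le_csInf (hxy.walkSums_nonempty d) fun s hs => hatd_le hd ?_
  refine walkSums_induction (P := fun y s => s ∈ walkSums E' d' x y)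
    (zero_mem_walkSums _ _ _) (fun y z s h hyz => ?_) hs
  rw [← hdd hyz]
  exact walkSums_snoc h (hE hyz)

lemma IsGraphPseudometric.hatd_triangle (h : IsGraphPseudometric E d) (hx : x ∈ Vtx E)
    (hy : y ∈ Vtx E) (hz : z ∈ Vtx E) : hatd E d x z ≤ hatd E d x y + hatd E d y z :=
  GraphMetricPaper.hatd_triangle h.nonneg (h.connected x hx y hy) (h.connected y hy z hz)

end Walks

namespace GluingSetup

variable {Ep : X → X → Prop} {wp : X → X → ℝ} {F : Set ((X → X → Prop) × (X → X → ℝ))}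
  {wd : X → X → ℝ} {f g : (X → X → Prop) × (X → X → ℝ)} {x y a b : X}

lemma isGraphPseudometric (hs : GluingSetup Ep wp F wd) (hf : f ∈ insert (Ep, wp) F) :
    IsGraphPseudometric f.1 f.2 := by
  rcases hf with rfl | hf
  exacts [hs.hp, hs.hF f hf]

lemma inter_nonempty (hs : GluingSetup Ep wp F wd) (hf : f ∈ insert (Ep, wp) F)
    (hx : x ∈ Vtx f.1) : (Vtx f.1 ∩ Vtx Ep).Nonempty := by
  rcases hf with rfl | hf
  exacts [⟨x, hx, hx⟩, hs.meet f hf]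

lemma hatd_eq (hs : GluingSetup Ep wp F wd) (hf : f ∈ insert (Ep, wp) F)
    (ha : a ∈ Vtx f.1 ∩ Vtx Ep) (hb : b ∈ Vtx f.1 ∩ Vtx Ep) :
    hatd f.1 f.2 a b = hatd Ep wp a b := by
  rcases hf with rfl | hf
  · rfl
  · by_cases hab : a = b
    · subst hab
      rw [hatd_self (hs.hF f hf).nonneg, hatd_self hs.hp.nonneg]
    · exact hs.agree f hf a ha b hb hab

lemma mem_vtx (hs : GluingSetup Ep wp F wd) (hf : f ∈ insert (Ep, wp) F)
    (hg : g ∈ insert (Ep, wp) F) (hfg : f ≠ g) (hxf : x ∈ Vtx f.1) (hxg : x ∈ Vtx g.1) :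
    x ∈ Vtx Ep := by
  rcases hf with rfl | hf
  · exact hxf
  rcases hg with rfl | hg
  · exact hxg
  exact hs.inter_sub f hf g hg hfg ⟨hxf, hxg⟩

lemma gluedEdge_iff : gluedEdge Ep F a b ↔ ∃ f ∈ insert (Ep, wp) F, f.1 a b := by
  simp [gluedEdge]

lemma gluedEdge_of_mem (hf : f ∈ insert (Ep, wp) F) (hab : f.1 a b) : gluedEdge Ep F a b :=
  gluedEdge_iff.mpr ⟨f, hf, hab⟩

lemma wd_eq (hs : GluingSetup Ep wp F wd) (hf : f ∈ insert (Ep, wp) F) (hab : f.1 a b) :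
    wd a b = f.2 a b := by
  rcases hf with rfl | hf
  exacts [hs.wd_p hab, hs.wd_F f hf hab]

lemma wd_nonneg (hs : GluingSetup Ep wp F wd) ⦃a b : X⦄ (hab : gluedEdge Ep F a b) :
    0 ≤ wd a b := by
  obtain ⟨f, hf, hab⟩ := (gluedEdge_iff (wp := wp)).mp hab
  rw [hs.wd_eq hf hab]
  exact (hs.isGraphPseudometric hf).nonneg hab

lemma joined (hs : GluingSetup Ep wp F wd) (hf : f ∈ insert (Ep, wp) F)
    (hx : x ∈ Vtx f.1) (hy : y ∈ Vtx f.1) : Joined (gluedEdge Ep F) x y :=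
  ((hs.isGraphPseudometric hf).connected x hx y hy).mono fun _ _ => gluedEdge_of_mem hf

lemma hatd_glued_le (hs : GluingSetup Ep wp F wd) (hf : f ∈ insert (Ep, wp) F)
    (hx : x ∈ Vtx f.1) (hy : y ∈ Vtx f.1) :
    hatd (gluedEdge Ep F) wd x y ≤ hatd f.1 f.2 x y :=
  hatd_le_hatd (fun _ _ => gluedEdge_of_mem hf) (fun _ _ => hs.wd_eq hf) hs.wd_nonneg
    ((hs.isGraphPseudometric hf).connected x hx y hy)

/-- Any walk of the glued graph from `V_f` to `V_g` is at least as long as a geodesic inside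
`V_f` (when `f = g`) or as a broken geodesic which travels through `V_p`. -/
lemma le_of_mem_walkSums (hs : GluingSetup Ep wp F wd) (hf : f ∈ insert (Ep, wp) F)
    (hx : x ∈ Vtx f.1) {s : ℝ} (hw : s ∈ walkSums (gluedEdge Ep F) wd x y)
    (hg : g ∈ insert (Ep, wp) F) (hy : y ∈ Vtx g.1) :
    (g = f ∧ hatd f.1 f.2 x y ≤ s) ∨ ∃ a ∈ Vtx f.1 ∩ Vtx Ep, ∃ b ∈ Vtx g.1 ∩ Vtx Ep,
      hatd f.1 f.2 x a + hatd Ep wp a b + hatd g.1 g.2 b y ≤ s := by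
  have hpf := hs.isGraphPseudometric hf
  refine walkSums_induction (P := fun y s => ∀ g ∈ insert (Ep, wp) F, y ∈ Vtx g.1 →
    (g = f ∧ hatd f.1 f.2 x y ≤ s) ∨ ∃ a ∈ Vtx f.1 ∩ Vtx Ep, ∃ b ∈ Vtx g.1 ∩ Vtx Ep,
      hatd f.1 f.2 x a + hatd Ep wp a b + hatd g.1 g.2 b y ≤ s) ?_ ?_ hw g hg hy
  · intro g hg hxg
    by_cases hgf : g = f
    · exact .inl ⟨hgf, (hatd_self hpf.nonneg x).le⟩
    · have hxp := hs.mem_vtx hg hf hgf hxg hx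
      refine .inr ⟨x, ⟨hx, hxp⟩, x, ⟨hxg, hxp⟩, ?_⟩
      simp [hatd_self hpf.nonneg, hatd_self hs.hp.nonneg,
        hatd_self (hs.isGraphPseudometric hg).nonneg]
  · intro y z s ih hyz g hg hzg
    obtain ⟨h, hh, hyz⟩ := (gluedEdge_iff (wp := wp)).mp hyz
    have hph := hs.isGraphPseudometric hh
    have hyh : y ∈ Vtx h.1 := ⟨z, hyz⟩
    have hzh : z ∈ Vtx h.1 := ⟨y, hph.symm hyz⟩
    rw [hs.wd_eq hh hyz, hph.edge_eq hyz]
    have hzp : g ≠ h → z ∈ Vtx Ep := fun hgh => hs.mem_vtx hg hh hgh hzg hzh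
    have hgz := hatd_self (hs.isGraphPseudometric hg).nonneg z
    rcases ih h hh hyh with ⟨rfl, hle⟩ | ⟨a, ha, b, hb, hle⟩
    · have htri := hph.hatd_triangle hx hyh hzh
      by_cases hgh : g = h
      · exact .inl ⟨hgh, by linarith⟩
      · refine .inr ⟨z, ⟨hzh, hzp hgh⟩, z, ⟨hzg, hzp hgh⟩, ?_⟩
        have hpz := hatd_self hs.hp.nonneg z
        linarith
    · have htri := hph.hatd_triangle hb.1 hyh hzh
      right
      by_cases hgh : g = h
      · subst hgh
        exact ⟨a, ha, b, hb, by linarith⟩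
      · refine ⟨a, ha, z, ⟨hzg, hzp hgh⟩, ?_⟩
        have hbz := hs.hatd_eq hh hb ⟨hzh, hzp hgh⟩
        have htri' := hs.hp.hatd_triangle ha.2 hb.2 (hzp hgh)
        linarith

lemma hatd_glued_eq (hs : GluingSetup Ep wp F wd) (hf : f ∈ insert (Ep, wp) F)
    (hx : x ∈ Vtx f.1) (hy : y ∈ Vtx f.1) :
    hatd (gluedEdge Ep F) wd x y = hatd f.1 f.2 x y := by
  refine (hs.hatd_glued_le hf hx hy).antisymm <|
    le_csInf ((hs.joined hf hx hy).walkSums_nonempty wd) fun s hw => ?_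
  have hpf := hs.isGraphPseudometric hf
  rcases hs.le_of_mem_walkSums hf hx hw hf hy with ⟨-, hle⟩ | ⟨a, ha, b, hb, hle⟩
  · exact hle
  · have hab := hs.hatd_eq hf ha hb
    have htri := hpf.hatd_triangle hx ha.1 hy
    have htri' := hpf.hatd_triangle ha.1 hb.1 hy
    linarith

lemma hatd_glued_eq_sInf (hs : GluingSetup Ep wp F wd) (hf : f ∈ insert (Ep, wp) F)
    (hg : g ∈ insert (Ep, wp) F) (hfg : f ≠ g) (hx : x ∈ Vtx f.1) (hy : y ∈ Vtx g.1) :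
    hatd (gluedEdge Ep F) wd x y =
      sInf {t : ℝ | ∃ a ∈ Vtx f.1 ∩ Vtx Ep, ∃ b ∈ Vtx g.1 ∩ Vtx Ep,
        t = hatd f.1 f.2 x a + hatd Ep wp a b + hatd g.1 g.2 b y} := by
  have hp : (Ep, wp) ∈ insert (Ep, wp) F := Set.mem_insert _ _
  obtain ⟨a₀, ha₀⟩ := hs.inter_nonempty hf hx
  obtain ⟨b₀, hb₀⟩ := hs.inter_nonempty hg hy
  apply le_antisymm
  · refine le_csInf ⟨_, a₀, ha₀, b₀, hb₀, rfl⟩ ?_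
    rintro _ ⟨a, ha, b, hb, rfl⟩
    have hxa := hs.joined hf hx ha.1
    have hab := hs.joined hp ha.2 hb.2
    have hby := hs.joined hg hb.1 hy
    linarith [hatd_triangle hs.wd_nonneg hxa (hab.trans hby),
      hatd_triangle hs.wd_nonneg hab hby, hs.hatd_glued_le hf hx ha.1,
      hs.hatd_glued_le hp ha.2 hb.2, hs.hatd_glued_le hg hb.1 hy]
  · have hxy : Joined (gluedEdge Ep F) x y :=
      (hs.joined hf hx ha₀.1).trans <| (hs.joined hp ha₀.2 hb₀.2).trans (hs.joined hg hb₀.1 hy)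
    refine le_csInf (hxy.walkSums_nonempty wd) fun s hw => ?_
    rcases hs.le_of_mem_walkSums hf hx hw hg hy with ⟨hgf, -⟩ | ⟨a, ha, b, hb, hle⟩
    · exact absurd hgf.symm hfg
    · refine le_trans (csInf_le ⟨0, ?_⟩ ⟨a, ha, b, hb, rfl⟩) hle
      rintro _ ⟨a, -, b, -, rfl⟩
      exact add_nonneg (add_nonneg (hatd_nonneg (hs.isGraphPseudometric hf).nonneg _ _)
        (hatd_nonneg hs.hp.nonneg _ _)) (hatd_nonneg (hs.isGraphPseudometric hg).nonneg _ _)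

end GluingSetup

/-- In the gluing setup, the shortest-path pseudometric of
`d = p ∪ ⋃𝔉` is computed by: `d̂(x,y) = f̂(x,y)` whenever `x, y ∈ V_f` for some
`f ∈ {p} ∪ 𝔉`, and `d̂(x,y) = inf {f̂(x,a) + p̂(a,b) + ĝ(b,y) : a ∈ V_f ∩ V_p,
b ∈ V_g ∩ V_p}` whenever `x ∈ V_f`, `y ∈ V_g` for distinct `f, g ∈ {p} ∪ 𝔉`. -/
theorem gluing_hatd_formula (Ep : X → X → Prop) (wp : X → X → ℝ)
    (F : Set ((X → X → Prop) × (X → X → ℝ))) (wd : X → X → ℝ)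
    (hs : GluingSetup Ep wp F wd) :
    (∀ f ∈ insert (Ep, wp) F, ∀ x ∈ Vtx f.1, ∀ y ∈ Vtx f.1,
      hatd (gluedEdge Ep F) wd x y = hatd f.1 f.2 x y) ∧
    (∀ f ∈ insert (Ep, wp) F, ∀ g ∈ insert (Ep, wp) F, f ≠ g →
      ∀ x ∈ Vtx f.1, ∀ y ∈ Vtx g.1,
      hatd (gluedEdge Ep F) wd x y =
        sInf {t : ℝ | ∃ a ∈ Vtx f.1 ∩ Vtx Ep, ∃ b ∈ Vtx g.1 ∩ Vtx Ep,
          t = hatd f.1 f.2 x a + hatd Ep wp a b + hatd g.1 g.2 b y}) := by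
  exact ⟨fun f hf x hx y hy => hs.hatd_glued_eq hf hx hy,
    fun f hf g hg hfg x hx y hy => hs.hatd_glued_eq_sInf hf hg hfg hx hy⟩

end GraphMetricPaper
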